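/- arXiv:0901.3186 — 2 statements merged into one kernel-verified Lean document; each statement's English description precedes it below -/
import Mathlib

section
/- For every u ∈ C_0^∞(ℝ³;ℝ³) with spherical-mean decomposition u = ū + v, one has ∫_{ℝ³}(Lu)·(Φu) dx = (1/2)|u(0)|² + B*(u,u), where (with summation over repeated indices 1..3) B*(u,u) = (α/2)∫_{ℝ³}(v_j ∂_k v_k − v_k ∂_k v_j) ∂_i Φ_ij dx + ∫_{ℝ³}(∂_k u_i ∂_k u_j + α ∂_k u_k ∂_i u_j) Φ_ij dx; i.e. in the first (antisymmetric) integral of the bilinear form the full field u may be replaced by its mean-free part v. -/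
/-!
The kernels `Φ = O(|x|⁻¹)` and `∂Φ = O(|x|⁻²)` are locally integrable on `ℝ³` and smooth off the
origin. A partial derivative of a function differentiable off the origin integrates to zero as
soon as the function and the derivative are integrable (`integral_pd_eq_zero`), so the energy may
be integrated by parts (`ibp_Phi`, `alg_ibp`). This produces the second integral of `B*` and
leaves `∫ (∂_k uᵢ uⱼ ∂_k Φᵢⱼ + α div u uⱼ ∂ᵢ Φᵢⱼ) dx`.

With `β = α/(α+2)` one has `∂ᵢ Φᵢⱼ = c_α (β - 1) xⱼ/|x|³` (`div_Phi`) and `α(β - 1) = -2β`. After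
subtraction of the antisymmetric form evaluated at `u`, only radial derivatives remain
(`alg_radial`): `-(c_α/2) r⁻² (∂_r |u|² + 3β ωᵢωⱼ ∂_r (uᵢuⱼ))`. In polar coordinates
(`integral_radial`), with `∫_{S²} ωᵢωⱼ dσ = (4π/3) δᵢⱼ` (`sph_moment`), this integrates to
`(1/2) · 4π c_α (1 + β) |u(0)|² = (1/2)|u(0)|²`.

Finally `u` may be replaced by `v` in the antisymmetric form. The derivatives of `ū` are radial,
so the terms quadratic in `ū` cancel pointwise, and the mixed terms are, up to a constant, the
divergence of `((x·ū) v - (x·v) ū)/|x|³` (`alg_cross`). As `ū(0) = u(0)`, the mean-free part is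
`O(|x|)` (`mean_props`, `meanfree_props`), so this field is `O(|x|⁻¹)` and its divergence
integrates to zero (`ibp_cross`).
-/

open MeasureTheory Metric Real Filter

noncomputable section

/-- `ℝ³` as Euclidean space. -/
abbrev E3 : Type := EuclideanSpace ℝ (Fin 3)

/-- Partial derivative `∂ᵢ f` on `ℝ³`. -/
def pd (i : Fin 3) (f : E3 → ℝ) (x : E3) : ℝ :=
  fderiv ℝ f x (EuclideanSpace.single i 1)

/-- Laplacian on `ℝ³`. -/
def lap (f : E3 → ℝ) (x : E3) : ℝ := ∑ i, pd i (pd i f) x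

/-- Divergence of a vector field on `ℝ³`. -/
def divg (u : E3 → Fin 3 → ℝ) (x : E3) : ℝ := ∑ k, pd k (fun y => u y k) x

/-- The 3D Lamé operator `(Lu)ᵢ = -Δuᵢ - α ∂ᵢ (div u)`. -/
def lame (α : ℝ) (u : E3 → Fin 3 → ℝ) (x : E3) (i : Fin 3) : ℝ :=
  - lap (fun y => u y i) x - α * pd i (divg u) x

/-- The constant `c_α = (α+2)/(8π(α+1))`. -/
def cA (α : ℝ) : ℝ := (α + 2) / (8 * Real.pi * (α + 1))

/-- The fundamental matrix `Φ` of the 3D Lamé system: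
`Φ_ij(x) = c_α |x|⁻¹ (δ_ij + (α/(α+2)) xᵢxⱼ/|x|²)`. -/
def Phi (α : ℝ) (x : E3) (i j : Fin 3) : ℝ :=
  cA α * ‖x‖⁻¹ * ((if i = j then (1 : ℝ) else 0) + (α / (α + 2)) * (x i * x j) / ‖x‖ ^ 2)

/-- `u ∈ C₀^∞(U; ℝ³)`: smooth, compactly supported, with support inside `U`. -/
def IsTestOn (U : Set E3) (u : E3 → Fin 3 → ℝ) : Prop :=
  ContDiff ℝ (⊤ : ℕ∞) u ∧ HasCompactSupport u ∧ tsupport u ⊆ U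

/-- `∫_{ℝ³} (Lu)·(Φ(·-y) u) dx`. -/
def lameEnergy (α : ℝ) (u : E3 → Fin 3 → ℝ) (y : E3) : ℝ :=
  ∫ x : E3, ∑ i, ∑ j, lame α u x i * Phi α (x - y) i j * u x j

/-- The surface measure on the unit sphere `S² ⊂ ℝ³` (total mass `4π`). -/
def sphMeas : Measure (sphere (0 : E3) 1) := volume.toSphere

/-- `∫_{S²} f(rω) dσ(ω)`. -/
def sphInt (f : E3 → ℝ) (r : ℝ) : ℝ := ∫ ω : sphere (0 : E3) 1, f (r • (ω : E3)) ∂sphMeas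

/-- `(ū, v)` is the spherical-mean decomposition of `u`:
`ūᵢ(r) = (1/(4π)) ∫_{S²} uᵢ(rω) dσ(ω)` and `uᵢ(x) = ūᵢ(|x|) + vᵢ(x)`. -/
def IsSphericalMeanDecomp (u : E3 → Fin 3 → ℝ) (ub : Fin 3 → ℝ → ℝ)
    (v : E3 → Fin 3 → ℝ) : Prop :=
  (∀ i r, ub i r = (1 / (4 * Real.pi)) * sphInt (fun x => u x i) r) ∧
  (∀ x i, u x i = ub i ‖x‖ + v x i)

/-! ### Integration on `ℝ³` with a singularity at the origin -/

/-- A singularity of order `|x|⁻²` at the origin is integrable for a function that vanishes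
outside a ball. -/
lemma integrable_sing (f : E3 → ℝ) (hf : AEStronglyMeasurable f volume) (C R : ℝ)
    (hb : ∀ x, x ≠ 0 → |f x| ≤ C * ‖x‖⁻¹ ^ 2) (hs : ∀ x, R ≤ ‖x‖ → f x = 0) :
    Integrable f := by
  have h1 : IntegrableOn (fun x : E3 => C * ‖x‖⁻¹ ^ 2) (ball (0 : E3) R) := by
    rw [integrableOn_fun_norm_addHaar volume (f := fun r => C * r⁻¹ ^ 2)]
    have : IntegrableOn (fun _ : ℝ => C) (Set.Ioo 0 R) := by
      simp [integrableOn_const_iff]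
    refine this.congr_fun ?_ measurableSet_Ioo
    intro y hy
    have : y ≠ 0 := hy.1.ne'
    simp
    field_simp
  have h2 : IntegrableOn f (ball (0 : E3) R) := by
    refine Integrable.mono' h1 hf.restrict ?_
    refine ae_restrict_of_ae ?_
    have : ∀ᵐ x : E3, x ≠ 0 := by simp [ae_iff]
    filter_upwards [this] with x hx
    exact hb x hx
  rw [integrableOn_iff_integrable_of_support_subset] at h2
  · exact h2
  · intro x hx
    by_contra h
    exact hx (hs x (by simpa using h))

/-- A partial derivative integrates to zero even if the function is only differentiable away
from the origin: by Fubini one integrates along the lines parallel to `e_k`, and almost every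
such line misses the origin. -/
lemma integral_pd_eq_zero (k : Fin 3) (F : E3 → ℝ) (hF : ∀ x, x ≠ 0 → DifferentiableAt ℝ F x)
    (hi : Integrable F) (hi' : Integrable (pd k F)) : ∫ x, pd k F x = 0 := by
  -- Coordinates separating the `k`-th variable from the other two.
  let e : ℝ × (Fin 2 → ℝ) → E3 := fun p => WithLp.toLp 2 (Fin.insertNth (α := fun _ => ℝ) k p.1 p.2)
  let e' : (ℝ × (Fin 2 → ℝ)) ≃ᵐ E3 := ((MeasurableEquiv.piFinSuccAbove (fun _ : Fin 3 => ℝ) k).symm).trans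
    (MeasurableEquiv.toLp 2 (Fin 3 → ℝ))
  have he : MeasurePreserving e' := by
    refine MeasurePreserving.trans
      (MeasurePreserving.symm _ (volume_preserving_piFinSuccAbove (fun _ : Fin 3 => ℝ) k)) ?_
    exact PiLp.volume_preserving_toLp (Fin 3)
  have hee : ∀ p, e' p = e p := fun p => rfl
  have hi2 : Integrable (fun p => F (e p)) (volume.prod volume) :=
    (he.integrable_comp_emb e'.measurableEmbedding).2 hi
  have hi2' : Integrable (fun p => pd k F (e p)) (volume.prod volume) :=
    (he.integrable_comp_emb e'.measurableEmbedding).2 hi'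
  have h1 : ∫ x, pd k F x = ∫ p, pd k F (e p) ∂(volume.prod volume) :=
    (he.integral_comp e'.measurableEmbedding (pd k F)).symm
  rw [h1, integral_prod_symm _ hi2']
  refine integral_eq_zero_of_ae ?_
  have hy0 : ∀ᵐ y : Fin 2 → ℝ, y ≠ 0 := by simp [ae_iff]
  filter_upwards [hi2.prod_left_ae, hi2'.prod_left_ae, hy0] with y h2 h2' hy
  refine integral_eq_zero_of_hasDerivAt_of_integrable (f := fun t => F (e (t, y))) ?_ h2' h2
  intro t
  have hne : e (t, y) ≠ 0 := by
    intro h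
    apply hy
    ext j
    have := congrArg (fun z : E3 => z (k.succAbove j)) h
    simpa [e] using this
  have hd : HasDerivAt (fun t => e (t, y)) (EuclideanSpace.single k (1 : ℝ)) t := by
    have h : (fun t => e (t, y)) = fun t => e (0, y) + t • EuclideanSpace.single k (1 : ℝ) := by
      ext t i
      refine Fin.succAboveCases k ?_ ?_ i
      · simp [e]
      · intro j
        simp [e]
    rw [h]
    simpa using ((hasDerivAt_id t).smul_const (EuclideanSpace.single k (1 : ℝ))).const_add (e (0, y))
  exact (hF _ hne).hasFDerivAt.comp_hasDerivAt t hd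

/-! ### Polar coordinates -/

/-- Integration in polar coordinates, `∫ G dx = ∫_{S²} ∫₀^∞ r² G(rω) dr dσ(ω)`. -/
lemma integral_polar (G : E3 → ℝ) (hG : Integrable G) :
    ∫ x, G x = ∫ ω : sphere (0 : E3) 1, (∫ r in Set.Ioi (0 : ℝ), r ^ 2 * G (r • (ω : E3))) ∂sphMeas := by
  have hd : Module.finrank ℝ E3 - 1 = 2 := by simp
  have hmp := (volume : Measure E3).measurePreserving_homeomorphUnitSphereProd
  rw [hd] at hmp
  let H : sphere (0 : E3) 1 × Set.Ioi (0 : ℝ) → ℝ := fun p => G (p.2.1 • (p.1 : E3))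
  have hH : ∀ x : ({(0 : E3)}ᶜ : Set E3), H (homeomorphUnitSphereProd E3 x) = G x := by
    intro x
    have hx : ‖(x : E3)‖ ≠ 0 := norm_ne_zero_iff.2 (by have := x.2; exact this)
    simp only [H]
    congr 1
    simp [smul_smul, hx]
  have h1 : ∫ x, G x = ∫ x : ({(0 : E3)}ᶜ : Set E3), G x ∂((volume : Measure E3).comap (↑)) := by
    rw [integral_subtype_comap (measurableSet_singleton _).compl G, restrict_compl_singleton]
  have h2 : Integrable (fun x : ({(0 : E3)}ᶜ : Set E3) => G x) ((volume : Measure E3).comap (↑)) := by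
    have := hG.integrableOn (s := ({(0 : E3)}ᶜ : Set E3))
    rwa [integrableOn_iff_comap_subtypeVal (measurableSet_singleton _).compl] at this
  have h3 : Integrable H ((volume : Measure E3).toSphere.prod (Measure.volumeIoiPow 2)) := by
    rw [← hmp.integrable_comp_emb (Homeomorph.measurableEmbedding _)]
    refine h2.congr (ae_of_all _ fun x => (hH x).symm)
  have h4 : ∫ p, H p ∂((volume : Measure E3).toSphere.prod (Measure.volumeIoiPow 2)) =
      ∫ x : ({(0 : E3)}ᶜ : Set E3), G x ∂((volume : Measure E3).comap (↑)) := by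
    rw [← hmp.integral_comp (Homeomorph.measurableEmbedding _)]
    exact integral_congr_ae (ae_of_all _ fun x => hH x)
  rw [h1, ← h4, integral_prod _ h3]
  refine integral_congr_ae (ae_of_all _ fun ω => ?_)
  simp only [H, Measure.volumeIoiPow, ENNReal.ofReal]
  rw [integral_withDensity_eq_integral_smul,
    integral_subtype_comap measurableSet_Ioi fun a : ℝ ↦ Real.toNNReal (a ^ 2) • G (a • (ω : E3)),
    setIntegral_congr_fun measurableSet_Ioi fun x hx ↦ ?_]
  · rw [NNReal.smul_def, Real.coe_toNNReal _ (by positivity), smul_eq_mul]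
  · exact (measurable_subtype_coe.pow_const _).real_toNNReal

lemma sphMeas_univ : sphMeas.real Set.univ = 4 * π := by
  rw [sphMeas, Measure.toSphere_real_apply_univ, measureReal_def, EuclideanSpace.volume_ball_fin_three]
  have := Real.pi_pos
  simp
  rw [ENNReal.toReal_ofReal (by positivity)]
  ring

instance : IsFiniteMeasure sphMeas := by unfold sphMeas; infer_instance

/-- The directional derivative of `φ` at `x` along `y`, in coordinates. -/
lemma pd_radial (φ : E3 → ℝ) (x y : E3) :
    ∑ k, pd k φ x * y k = fderiv ℝ φ x y := by
  conv_rhs => rw [← (EuclideanSpace.basisFun (Fin 3) ℝ).sum_repr y]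
  simp [pd, mul_comm]

lemma bdd_of_cs {f : E3 → ℝ} (hc : Continuous f) (hs : HasCompactSupport f) :
    ∃ C, 0 ≤ C ∧ ∀ x, |f x| ≤ C := by
  obtain ⟨C, hC⟩ := hs.exists_bound_of_continuous hc
  exact ⟨C, (norm_nonneg _).trans (hC 0), hC⟩

lemma zero_of_cs {f : E3 → ℝ} (hs : HasCompactSupport f) :
    ∃ R, ∀ x, R ≤ ‖x‖ → f x = 0 := by
  obtain ⟨R, hR⟩ := hs.isCompact.isBounded.subset_ball 0
  refine ⟨R, fun x hx => ?_⟩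
  by_contra h
  have := hR (subset_tsupport _ h)
  simp at this
  linarith

lemma pd_continuous {f : E3 → ℝ} (hf : ContDiff ℝ 1 f) (k : Fin 3) : Continuous (pd k f) :=
  (hf.continuous_fderiv one_ne_zero).clm_apply continuous_const

lemma pd_cs {f : E3 → ℝ} (hs : HasCompactSupport f) (k : Fin 3) : HasCompactSupport (pd k f) :=
  hs.fderiv_apply (𝕜 := ℝ) _

lemma abs_coord (x : E3) (i : Fin 3) : |x i| ≤ ‖x‖ := by
  simpa using PiLp.norm_apply_le x i

/-- For `h` homogeneous of degree zero, `∫ ∂_r φ r⁻² h dx = -φ(0) ∫_{S²} h dσ`: in polar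
coordinates the weight `r⁻²` cancels the Jacobian and the radial integral of `∂_r φ` is `-φ(0)`. -/
lemma integral_radial (φ : E3 → ℝ) (hφ : ContDiff ℝ 1 φ) (hs : HasCompactSupport φ)
    (h : E3 → ℝ) (hm : Measurable h) (M : ℝ) (hM : ∀ x, |h x| ≤ M)
    (hh : ∀ r : ℝ, 0 < r → ∀ x, h (r • x) = h x) :
    Integrable (fun x => (∑ k, pd k φ x * x k) * ‖x‖⁻¹ ^ 3 * h x) ∧
    ∫ x, (∑ k, pd k φ x * x k) * ‖x‖⁻¹ ^ 3 * h x = - φ 0 * ∫ ω : sphere (0 : E3) 1, h ω ∂sphMeas := by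
  have hM0 : 0 ≤ M := (abs_nonneg _).trans (hM 0)
  have hint : Integrable (fun x => (∑ k, pd k φ x * x k) * ‖x‖⁻¹ ^ 3 * h x) := by
    choose C hC0 hC using fun k => bdd_of_cs (pd_continuous hφ k) (pd_cs hs k)
    choose R hR using fun k => zero_of_cs (pd_cs hs k)
    refine integrable_sing _ ?_ ((∑ k, C k) * M) (∑ k, |R k|) ?_ ?_
    · have := fun k => (pd_continuous hφ k).measurable
      have h2 : Measurable fun x : E3 => (∑ k, pd k φ x * x k) * ‖x‖⁻¹ ^ 3 * h x := by fun_prop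
      exact h2.aestronglyMeasurable
    · intro x hx
      have hx' : 0 < ‖x‖ := norm_pos_iff.2 hx
      have h1 : |∑ k, pd k φ x * x k| ≤ (∑ k, C k) * ‖x‖ := by
        rw [Finset.sum_mul]
        refine (Finset.abs_sum_le_sum_abs _ _).trans (Finset.sum_le_sum fun k _ => ?_)
        rw [abs_mul]
        exact mul_le_mul (hC k x) (abs_coord x k) (abs_nonneg _) (hC0 k)
      rw [abs_mul, abs_mul, abs_of_nonneg (a := ‖x‖⁻¹ ^ 3) (by positivity)]
      have : 0 ≤ ∑ k, C k := Finset.sum_nonneg fun k _ => hC0 k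
      calc _ ≤ ((∑ k, C k) * ‖x‖) * ‖x‖⁻¹ ^ 3 * M := by gcongr; exact hM x
        _ = _ := by field_simp
    · intro x hx
      rw [Finset.sum_eq_zero, zero_mul, zero_mul]
      intro k _
      rw [hR k x, zero_mul]
      exact (le_abs_self _).trans ((Finset.single_le_sum (f := fun k => |R k|) (fun _ _ => abs_nonneg _) (Finset.mem_univ k)).trans hx)
  refine ⟨hint, ?_⟩
  rw [integral_polar _ hint, ← integral_const_mul]
  refine integral_congr_ae (ae_of_all _ fun ω => ?_)
  have hω : ‖(ω : E3)‖ = 1 := by simp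
  have hψ : ContDiff ℝ 1 (fun r : ℝ => φ (r • (ω : E3))) :=
    hφ.comp (contDiff_id.smul contDiff_const)
  have hψs : HasCompactSupport (fun r : ℝ => φ (r • (ω : E3))) := by
    obtain ⟨R, hR⟩ := zero_of_cs hs
    refine HasCompactSupport.intro (isCompact_Icc (a := -|R|) (b := |R|)) fun r hr => hR _ ?_
    rw [norm_smul, hω, mul_one, Real.norm_eq_abs]
    by_contra hcon
    exact hr (abs_le.1 ((not_le.1 hcon).le.trans (le_abs_self _)))
  have hd : ∀ r : ℝ, deriv (fun r : ℝ => φ (r • (ω : E3))) r = fderiv ℝ φ (r • (ω : E3)) ω := by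
    intro r
    have h1 : HasDerivAt (fun r : ℝ => r • (ω : E3)) (ω : E3) r := by
      simpa using (hasDerivAt_id r).smul_const (ω : E3)
    exact ((hφ.differentiable one_ne_zero _).hasFDerivAt.comp_hasDerivAt r h1).deriv
  have := hψs.integral_Ioi_deriv_eq hψ 0
  simp only [zero_smul] at this
  show ∫ r in Set.Ioi (0 : ℝ), _ = _
  simp only
  rw [← this, ← integral_mul_const]
  refine setIntegral_congr_fun measurableSet_Ioi fun r hr => ?_
  have hr : 0 < r := hr
  rw [hd, hh r hr, pd_radial, norm_smul, hω, map_smul]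
  simp
  rw [abs_of_pos hr]
  field_simp

/-- The second moments of the sphere, `∫_{S²} ωᵢωⱼ dσ = (4π/3) δᵢⱼ`, contracted with `aᵢaⱼ`.
The symmetries are those of Lebesgue measure on the unit ball (reflection of one coordinate,
exchange of two), transported to the sphere by polar coordinates. -/
lemma sph_moment (a : Fin 3 → ℝ) :
    ∑ i, ∑ j, a i * a j * ∫ ω : sphere (0 : E3) 1, (ω : E3) i * (ω : E3) j ∂sphMeas
      = 4 * π / 3 * ∑ i, a i ^ 2 := by
  let N : Fin 3 → Fin 3 → ℝ := fun i j =>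
    ∫ x : E3, (ball (0 : E3) 1).indicator (fun x => x i * x j) x
  let M : Fin 3 → Fin 3 → ℝ := fun i j => ∫ ω : sphere (0 : E3) 1, (ω : E3) i * (ω : E3) j ∂sphMeas
  have hcont : ∀ i j : Fin 3, Continuous fun x : E3 => x i * x j := fun i j => by fun_prop
  -- The factor is `∫₀¹ r⁴ dr`.
  have hNM : ∀ i j, N i j = M i j * ((1 : ℝ) / 5) := by
    intro i j
    have hi : Integrable ((ball (0 : E3) 1).indicator (fun x => x i * x j)) := by
      rw [integrable_indicator_iff measurableSet_ball]
      exact ((hcont i j).continuousOn.integrableOn_compact (isCompact_closedBall 0 1)).mono_set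
        ball_subset_closedBall
    simp only [N, M]
    rw [integral_polar _ hi, ← integral_mul_const]
    refine integral_congr_ae (ae_of_all _ fun ω => ?_)
    have hω : ‖(ω : E3)‖ = 1 := by simp
    have h1 : ∀ r ∈ Set.Ioi (0 : ℝ),
        r ^ 2 * (ball (0 : E3) 1).indicator (fun x => x i * x j) (r • (ω : E3)) =
          (Set.Iio (1 : ℝ)).indicator (fun r => r ^ 4 * ((ω : E3) i * (ω : E3) j)) r := by
      intro r hr
      have hr : 0 < r := hr
      by_cases h : r < 1
      · rw [Set.indicator_of_mem, Set.indicator_of_mem (show r ∈ Set.Iio (1:ℝ) from h)]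
        · simp; ring
        · simp [norm_smul, abs_of_pos hr, h]
      · rw [Set.indicator_of_notMem, Set.indicator_of_notMem (show r ∉ Set.Iio (1:ℝ) from h), mul_zero]
        simpa [norm_smul, abs_of_pos hr] using h
    simp only
    rw [setIntegral_congr_fun measurableSet_Ioi h1, setIntegral_indicator measurableSet_Iio,
      Set.Ioi_inter_Iio, integral_mul_const, ← integral_Ioc_eq_integral_Ioo,
      ← intervalIntegral.integral_of_le zero_le_one, integral_pow]
    norm_num
    ring
  have hinv : ∀ (A : E3 ≃ₗᵢ[ℝ] E3) (i j : Fin 3),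
      N i j = ∫ x : E3, (ball (0 : E3) 1).indicator (fun x => (A x) i * (A x) j) x := by
    intro A i j
    simp only [N]
    rw [← A.measurePreserving.integral_comp A.toHomeomorph.measurableEmbedding]
    refine integral_congr_ae (ae_of_all _ fun x => ?_)
    simp [Set.indicator]
  have hoff : ∀ i j, i ≠ j → M i j = 0 := by
    intro i j hij
    have := hinv (LinearIsometryEquiv.piLpCongrRight 2
      (fun l => if l = i then LinearIsometryEquiv.neg ℝ else LinearIsometryEquiv.refl ℝ ℝ)) i j
    have h2 : N i j = - N i j := by
      conv_lhs => rw [this]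
      simp only [N]
      rw [← integral_neg]
      refine integral_congr_ae (ae_of_all _ fun x => ?_)
      simp only [Set.indicator]
      split_ifs <;> simp [hij.symm]
    have h3 := hNM i j
    linarith
  have hdiag : ∀ i, M i i = M 0 0 := by
    intro i
    have := hinv (LinearIsometryEquiv.piLpCongrLeft 2 ℝ ℝ (Equiv.swap 0 i)) i i
    have h2 : N i i = N 0 0 := by
      rw [this]
      simp only [N]
      refine integral_congr_ae (ae_of_all _ fun x => ?_)
      simp [Set.indicator]
    have h3 := hNM i i
    have h4 := hNM 0 0
    linarith
  have htr : ∑ i, M i i = 4 * π := by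
    simp only [M]
    rw [← integral_finsetSum]
    · rw [← sphMeas_univ, ← mul_one (sphMeas.real Set.univ), ← smul_eq_mul, ← integral_const]
      refine integral_congr_ae (ae_of_all _ fun ω => ?_)
      have hω : ‖(ω : E3)‖ = 1 := by simp
      have := EuclideanSpace.norm_sq_eq (ω : E3)
      simp [hω] at this
      simp only [← pow_two]
      exact this.symm
    · intro i _
      have : Continuous fun ω : sphere (0 : E3) 1 => (ω : E3) i * (ω : E3) i := by fun_prop
      exact this.integrable_of_hasCompactSupport (HasCompactSupport.of_compactSpace _)
  change ∑ i, ∑ j, a i * a j * M i j = _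
  simp only [Fin.sum_univ_three] at htr ⊢
  rw [hoff 0 1 (by decide), hoff 0 2 (by decide), hoff 1 0 (by decide), hoff 1 2 (by decide),
    hoff 2 0 (by decide), hoff 2 1 (by decide), hdiag 1, hdiag 2]
  rw [hdiag 1, hdiag 2] at htr
  have : M 0 0 = 4 * π / 3 := by linarith
  rw [this]
  ring

/-! ### Partial derivatives and bounds for the fundamental matrix -/

lemma ae_ne_zero : ∀ᵐ x : E3, x ≠ 0 := by simp [ae_iff]

/-- A singularity of order `|x|⁻¹` at the origin is integrable for a function that vanishes
outside a ball. -/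
lemma integrable_sing1 (f : E3 → ℝ) (hf : AEStronglyMeasurable f volume) (C R : ℝ)
    (hb : ∀ x, x ≠ 0 → |f x| ≤ C * ‖x‖⁻¹) (hs : ∀ x, R ≤ ‖x‖ → f x = 0) :
    Integrable f := by
  refine integrable_sing f hf (|C| * |R|) R ?_ hs
  intro x hx
  have hx' : 0 < ‖x‖ := norm_pos_iff.2 hx
  by_cases h : R ≤ ‖x‖
  · rw [hs x h, abs_zero]; positivity
  · have h1 : ‖x‖ ≤ |R| := (not_le.1 h).le.trans (le_abs_self R)
    calc |f x| ≤ |C| * ‖x‖⁻¹ := (hb x hx).trans (by gcongr; exact le_abs_self C)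
      _ = |C| * ‖x‖ * ‖x‖⁻¹ ^ 2 := by field_simp
      _ ≤ _ := by gcongr

lemma pd_mul {f g : E3 → ℝ} {x : E3} (k : Fin 3) (hf : DifferentiableAt ℝ f x)
    (hg : DifferentiableAt ℝ g x) :
    pd k (fun y => f y * g y) x = pd k f x * g x + f x * pd k g x := by
  simp only [pd]
  rw [fderiv_fun_mul hf hg]
  simp
  ring

lemma pd_add {f g : E3 → ℝ} {x : E3} (k : Fin 3) (hf : DifferentiableAt ℝ f x)
    (hg : DifferentiableAt ℝ g x) :
    pd k (fun y => f y + g y) x = pd k f x + pd k g x := by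
  simp only [pd]
  rw [fderiv_fun_add hf hg]
  simp

lemma pd_sub {f g : E3 → ℝ} {x : E3} (k : Fin 3) (hf : DifferentiableAt ℝ f x)
    (hg : DifferentiableAt ℝ g x) :
    pd k (fun y => f y - g y) x = pd k f x - pd k g x := by
  simp only [pd]
  rw [fderiv_fun_sub hf hg]
  simp

lemma pd_const_mul {g : E3 → ℝ} {x : E3} (k : Fin 3) (c : ℝ)
    (hg : DifferentiableAt ℝ g x) :
    pd k (fun y => c * g y) x = c * pd k g x := by
  simp only [pd]
  rw [fderiv_const_mul hg]
  simp

lemma pd_coord (k i : Fin 3) (x : E3) :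
    pd k (fun y => y i) x = if i = k then 1 else 0 := by
  have : HasFDerivAt (fun y : E3 => y i) (EuclideanSpace.proj i : E3 →L[ℝ] ℝ) x :=
    (EuclideanSpace.proj i : E3 →L[ℝ] ℝ).hasFDerivAt
  simp only [pd]
  rw [this.fderiv]
  simp

lemma diff_norm {x : E3} (hx : x ≠ 0) : DifferentiableAt ℝ (fun y : E3 => ‖y‖) x :=
  (contDiffAt_norm ℝ hx).differentiableAt one_ne_zero

lemma diff_coord (i : Fin 3) (x : E3) : DifferentiableAt ℝ (fun y : E3 => y i) x :=
  (EuclideanSpace.proj i : E3 →L[ℝ] ℝ).differentiableAt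

lemma norm_sq_sum (x : E3) : ‖x‖ ^ 2 = x 0 ^ 2 + x 1 ^ 2 + x 2 ^ 2 := by
  rw [EuclideanSpace.norm_sq_eq]; simp [Fin.sum_univ_three]

lemma pd_norm (k : Fin 3) {x : E3} (hx : x ≠ 0) :
    pd k (fun y => ‖y‖) x = x k * ‖x‖⁻¹ := by
  have h1 : pd k (fun y : E3 => ‖y‖ * ‖y‖) x = 2 * x k := by
    have : (fun y : E3 => ‖y‖ * ‖y‖) = fun y => y 0 * y 0 + y 1 * y 1 + y 2 * y 2 := by
      funext y
      have := norm_sq_sum y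
      nlinarith
    rw [this]
    have d := fun i => diff_coord i x
    rw [pd_add k (by fun_prop) (by fun_prop), pd_add k (by fun_prop) (by fun_prop), pd_mul k (d 0) (d 0), pd_mul k (d 1) (d 1),
      pd_mul k (d 2) (d 2)]
    simp only [pd_coord]
    fin_cases k <;> simp <;> ring
  rw [pd_mul k (diff_norm hx) (diff_norm hx)] at h1
  have : ‖x‖ ≠ 0 := norm_ne_zero_iff.2 hx
  field_simp
  linarith

lemma pd_comp_norm (k : Fin 3) {x : E3} (hx : x ≠ 0) {g : ℝ → ℝ} {g' : ℝ}
    (hg : HasDerivAt g g' ‖x‖) : pd k (fun y => g ‖y‖) x = g' * (x k * ‖x‖⁻¹) := by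
  rw [← pd_norm k hx]
  simp only [pd]
  have := hg.comp_hasFDerivAt x (diff_norm hx).hasFDerivAt
  rw [show (fun y : E3 => g ‖y‖) = g ∘ fun y : E3 => ‖y‖ from rfl, this.fderiv]
  simp

lemma diff_invpow (n : ℕ) {x : E3} (hx : x ≠ 0) :
    DifferentiableAt ℝ (fun y : E3 => ‖y‖⁻¹ ^ n) x :=
  ((diff_norm hx).inv (norm_ne_zero_iff.2 hx)).pow n

lemma pd_invpow (n : ℕ) (k : Fin 3) {x : E3} (hx : x ≠ 0) :
    pd k (fun y => ‖y‖⁻¹ ^ n) x = - n * x k * ‖x‖⁻¹ ^ (n + 2) := by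
  have h0 : ‖x‖ ≠ 0 := norm_ne_zero_iff.2 hx
  have := ((hasDerivAt_inv h0).pow n)
  rw [pd_comp_norm k hx (g := fun r => r⁻¹ ^ n) this]
  rcases n with _ | n
  · simp
  · push_cast
    ring

lemma Phi_eq (α : ℝ) (i j : Fin 3) : (fun x => Phi α x i j) = fun x =>
    cA α * ((if i = j then (1 : ℝ) else 0) * ‖x‖⁻¹ ^ 1 +
      (α / (α + 2)) * (x i * x j * ‖x‖⁻¹ ^ 3)) := by
  funext x
  simp only [Phi, div_eq_mul_inv]
  ring

lemma diff_Phi (α : ℝ) (i j : Fin 3) {x : E3} (hx : x ≠ 0) :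
    DifferentiableAt ℝ (fun y => Phi α y i j) x := by
  rw [Phi_eq]
  have h1 := diff_invpow 1 hx
  have h3 := diff_invpow 3 hx
  have := diff_coord i x
  have := diff_coord j x
  fun_prop

lemma pd_Phi (α : ℝ) (i j k : Fin 3) {x : E3} (hx : x ≠ 0) :
    pd k (fun y => Phi α y i j) x = cA α * (-(if i = j then (1 : ℝ) else 0) * x k * ‖x‖⁻¹ ^ 3 +
      (α / (α + 2)) * (((if i = k then (1 : ℝ) else 0) * x j + (if j = k then (1 : ℝ) else 0) * x i)
        * ‖x‖⁻¹ ^ 3 - 3 * (x i * x j * x k) * ‖x‖⁻¹ ^ 5)) := by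
  rw [Phi_eq]
  have h1 := diff_invpow 1 hx
  have h3 := diff_invpow 3 hx
  have di := diff_coord i x
  have dj := diff_coord j x
  rw [pd_const_mul k _ (by fun_prop), pd_add k (by fun_prop) (by fun_prop),
    pd_const_mul k _ h1, pd_const_mul k _ (by fun_prop), pd_mul k (by fun_prop) h3, pd_mul k di dj,
    pd_invpow 1 k hx, pd_invpow 3 k hx, pd_coord, pd_coord]
  push_cast
  ring

lemma meas_Phi (α : ℝ) (i j : Fin 3) : Measurable fun x => Phi α x i j := by
  rw [Phi_eq]; fun_prop

lemma meas_pd (f : E3 → ℝ) (k : Fin 3) : Measurable (pd k f) :=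
  measurable_fderiv_apply_const ℝ f _

/-- The components of `x/|x|` are bounded by `1`, also at `x = 0`, where `‖x‖⁻¹ = 0`. -/
lemma coord_rho (x : E3) (i : Fin 3) : |x i * ‖x‖⁻¹| ≤ 1 := by
  rw [abs_mul, abs_of_nonneg (a := ‖x‖⁻¹) (by positivity)]
  by_cases hx : x = 0
  · simp [hx]
  · have : 0 < ‖x‖ := norm_pos_iff.2 hx
    rw [← div_eq_mul_inv, div_le_one this]
    exact abs_coord x i

lemma abs_delta (i j : Fin 3) : |(if i = j then (1 : ℝ) else 0)| ≤ 1 := by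
  split_ifs <;> simp

lemma abs_mul_le_one {a b : ℝ} (ha : |a| ≤ 1) (hb : |b| ≤ 1) : |a * b| ≤ 1 := by
  rw [abs_mul]; exact mul_le_one₀ ha (abs_nonneg _) hb

lemma Phi_bound (α : ℝ) (i j : Fin 3) (x : E3) :
    |Phi α x i j| ≤ |cA α| * (1 + |α / (α + 2)|) * ‖x‖⁻¹ := by
  have h : Phi α x i j = cA α * ((if i = j then (1 : ℝ) else 0) +
      (α / (α + 2)) * ((x i * ‖x‖⁻¹) * (x j * ‖x‖⁻¹))) * ‖x‖⁻¹ := by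
    simp only [Phi, div_eq_mul_inv]; ring
  rw [h, abs_mul, abs_mul, abs_of_nonneg (a := ‖x‖⁻¹) (by positivity)]
  gcongr
  refine (abs_add_le _ _).trans (add_le_add (abs_delta i j) ?_)
  rw [abs_mul]
  exact mul_le_of_le_one_right (abs_nonneg _) (abs_mul_le_one (coord_rho x i) (coord_rho x j))

lemma pd_Phi_bound (α : ℝ) (i j k : Fin 3) {x : E3} (hx : x ≠ 0) :
    |pd k (fun y => Phi α y i j) x| ≤ |cA α| * (1 + |α / (α + 2)| * 5) * ‖x‖⁻¹ ^ 2 := by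
  have hi := coord_rho x i
  have hj := coord_rho x j
  have hk := coord_rho x k
  rw [pd_Phi α i j k hx]
  have h : cA α * (-(if i = j then (1 : ℝ) else 0) * x k * ‖x‖⁻¹ ^ 3 +
      (α / (α + 2)) * (((if i = k then (1 : ℝ) else 0) * x j + (if j = k then (1 : ℝ) else 0) * x i)
        * ‖x‖⁻¹ ^ 3 - 3 * (x i * x j * x k) * ‖x‖⁻¹ ^ 5)) =
      cA α * (-((if i = j then (1 : ℝ) else 0) * (x k * ‖x‖⁻¹)) +
      (α / (α + 2)) * (((if i = k then (1 : ℝ) else 0) * (x j * ‖x‖⁻¹) +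
        (if j = k then (1 : ℝ) else 0) * (x i * ‖x‖⁻¹))
        - 3 * ((x i * ‖x‖⁻¹) * (x j * ‖x‖⁻¹) * (x k * ‖x‖⁻¹)))) * ‖x‖⁻¹ ^ 2 := by ring
  rw [h, abs_mul, abs_mul, abs_of_nonneg (a := ‖x‖⁻¹ ^ 2) (by positivity)]
  have a1 := abs_le.1 (abs_mul_le_one (abs_delta i k) hj)
  have a2 := abs_le.1 (abs_mul_le_one (abs_delta j k) hi)
  have a3 := abs_le.1 (abs_mul_le_one (abs_mul_le_one hi hj) hk)
  gcongr
  refine (abs_add_le _ _).trans (add_le_add ?_ ?_)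
  · rw [abs_neg]; exact abs_mul_le_one (abs_delta i j) hk
  · rw [abs_mul]
    gcongr
    rw [abs_le]
    constructor <;> linarith [a1.1, a1.2, a2.1, a2.2, a3.1, a3.2]

/-! ### Integration by parts against the fundamental matrix -/

lemma int_mul_Phi (α : ℝ) (i j : Fin 3) {g : E3 → ℝ} (hg : Continuous g) (hs : HasCompactSupport g) :
    Integrable fun x => g x * Phi α x i j := by
  obtain ⟨C, hC0, hC⟩ := bdd_of_cs hg hs
  obtain ⟨R, hR⟩ := zero_of_cs hs
  refine integrable_sing1 _ (hg.measurable.mul (meas_Phi α i j)).aestronglyMeasurable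
    (C * (|cA α| * (1 + |α / (α + 2)|))) R ?_ ?_
  · intro x _
    rw [abs_mul, mul_assoc]
    exact mul_le_mul (hC x) (Phi_bound α i j x) (abs_nonneg _) hC0
  · intro x hx
    rw [hR x hx, zero_mul]

lemma int_mul_pd_Phi (α : ℝ) (i j k : Fin 3) {g : E3 → ℝ} (hg : Continuous g)
    (hs : HasCompactSupport g) :
    Integrable fun x => g x * pd k (fun z => Phi α z i j) x := by
  obtain ⟨C, hC0, hC⟩ := bdd_of_cs hg hs
  obtain ⟨R, hR⟩ := zero_of_cs hs
  refine integrable_sing _ (hg.measurable.mul (meas_pd _ k)).aestronglyMeasurable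
    (C * (|cA α| * (1 + |α / (α + 2)| * 5))) R ?_ ?_
  · intro x hx
    rw [abs_mul, mul_assoc]
    exact mul_le_mul (hC x) (pd_Phi_bound α i j k hx) (abs_nonneg _) hC0
  · intro x hx
    rw [hR x hx, zero_mul]

/-- `f` is integrable over `ℝ³` with integral `a`. -/
def HasI (f : E3 → ℝ) (a : ℝ) : Prop := Integrable f ∧ ∫ x, f x = a

lemma HasI.add {f g : E3 → ℝ} {a b : ℝ} (hf : HasI f a) (hg : HasI g b) :
    HasI (fun x => f x + g x) (a + b) :=
  ⟨hf.1.add hg.1, by rw [integral_add hf.1 hg.1, hf.2, hg.2]⟩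

lemma HasI.const_mul {f : E3 → ℝ} {a : ℝ} (hf : HasI f a) (c : ℝ) :
    HasI (fun x => c * f x) (c * a) :=
  ⟨hf.1.const_mul c, by rw [integral_const_mul, hf.2]⟩

lemma HasI.sum {f : Fin 3 → E3 → ℝ} {a : Fin 3 → ℝ} (hf : ∀ i, HasI (f i) (a i)) :
    HasI (fun x => ∑ i, f i x) (∑ i, a i) :=
  ⟨integrable_finsetSum _ fun i _ => (hf i).1, by
    rw [integral_finsetSum _ fun i _ => (hf i).1]; simp only [fun i => (hf i).2]⟩

/-- A single point is a null set, so integrands need only be compared away from the origin. -/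
lemma HasI.congr {f g : E3 → ℝ} {a : ℝ} (hf : HasI f a) (h : ∀ x, x ≠ 0 → f x = g x) :
    HasI g a := by
  have h' : f =ᵐ[volume] g := ae_ne_zero.mono h
  exact ⟨hf.1.congr h', by rw [← integral_congr_ae h', hf.2]⟩

/-- Integration by parts against `Φᵢⱼ`: its singularity at the origin contributes nothing. -/
lemma ibp_Phi (α : ℝ) (i j k : Fin 3) {g : E3 → ℝ} (hg : ContDiff ℝ 1 g)
    (hs : HasCompactSupport g) :
    HasI (fun x => pd k g x * Phi α x i j + g x * pd k (fun z => Phi α z i j) x) 0 := by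
  have hpt : ∀ x, x ≠ 0 → pd k (fun y => g y * Phi α y i j) x =
      pd k g x * Phi α x i j + g x * pd k (fun z => Phi α z i j) x := fun x hx =>
    pd_mul k (hg.differentiable one_ne_zero x) (diff_Phi α i j hx)
  have hi := (int_mul_Phi α i j (pd_continuous hg k) (pd_cs hs k)).add
    (int_mul_pd_Phi α i j k hg.continuous hs)
  refine HasI.congr (f := pd k (fun y => g y * Phi α y i j)) ⟨?_, ?_⟩ hpt
  · exact hi.congr (ae_ne_zero.mono fun x hx => (hpt x hx).symm)
  · refine integral_pd_eq_zero k _ ?_ (int_mul_Phi α i j hg.continuous hs) ?_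
    · intro x hx
      exact (hg.differentiable one_ne_zero x).mul (diff_Phi α i j hx)
    · exact hi.congr (ae_ne_zero.mono fun x hx => (hpt x hx).symm)

/-! ### The spherical mean and the mean-free part -/

/-- The spherical mean of a `C¹` compactly supported function is differentiable in `r`, bounded
with bounded derivative, eventually zero, and takes the value `f 0` at `r = 0`. -/
lemma mean_props (f : E3 → ℝ) (hf : ContDiff ℝ 1 f) (hs : HasCompactSupport f) (m : ℝ → ℝ)
    (hm : ∀ r, m r = (1 / (4 * π)) * sphInt f r) :
    ∃ m' : ℝ → ℝ, ∃ C R : ℝ, 0 ≤ C ∧ (∀ r, HasDerivAt m (m' r) r) ∧ (∀ r, |m' r| ≤ C) ∧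
      (∀ r, |m r| ≤ C) ∧ m 0 = f 0 ∧ ∀ r, R ≤ r → m r = 0 := by
  have hpi := Real.pi_pos
  obtain ⟨C1, hC10, hC1⟩ := bdd_of_cs hf.continuous hs
  obtain ⟨C2, hC2⟩ := (hs.fderiv (𝕜 := ℝ)).exists_bound_of_continuous (hf.continuous_fderiv one_ne_zero)
  have hC20 : 0 ≤ C2 := (norm_nonneg _).trans (hC2 0)
  obtain ⟨R, hR⟩ := zero_of_cs hs
  have hcon : ∀ r : ℝ, Continuous fun ω : sphere (0 : E3) 1 => f (r • (ω : E3)) := fun r =>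
    hf.continuous.comp (by fun_prop)
  have hω : ∀ ω : sphere (0 : E3) 1, ‖(ω : E3)‖ = 1 := fun ω => by simp
  have hbd : ∀ (ω : sphere (0 : E3) 1) (r : ℝ), ‖fderiv ℝ f (r • (ω : E3)) ω‖ ≤ C2 := fun ω r => by
    simpa [hω ω] using (fderiv ℝ f (r • (ω : E3))).le_of_opNorm_le (hC2 _) (ω : E3)
  have hder : ∀ r, HasDerivAt (sphInt f)
      (∫ ω : sphere (0 : E3) 1, fderiv ℝ f (r • (ω : E3)) ω ∂sphMeas) r := by
    intro r
    refine (hasDerivAt_integral_of_dominated_loc_of_deriv_le (s := Set.univ) (bound := fun _ => C2)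
      (F := fun (r : ℝ) (ω : sphere (0 : E3) 1) => f (r • (ω : E3)))
      (F' := fun (r : ℝ) (ω : sphere (0 : E3) 1) => fderiv ℝ f (r • (ω : E3)) ω)
      Filter.univ_mem ?_ ?_ ?_ ?_ (integrable_const _) ?_).2
    · exact Eventually.of_forall fun r => (hcon r).aestronglyMeasurable
    · exact (hcon r).integrable_of_hasCompactSupport (HasCompactSupport.of_compactSpace _)
    · have : Continuous fun ω : sphere (0 : E3) 1 => fderiv ℝ f (r • (ω : E3)) ω :=
        ((hf.continuous_fderiv one_ne_zero).comp (by fun_prop)).clm_apply (by fun_prop)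
      exact this.aestronglyMeasurable
    · exact ae_of_all _ fun ω r _ => hbd ω r
    · refine ae_of_all _ fun ω r _ => ?_
      have h1 : HasDerivAt (fun r : ℝ => r • (ω : E3)) (ω : E3) r := by
        simpa using (hasDerivAt_id r).smul_const (ω : E3)
      exact (hf.differentiable one_ne_zero _).hasFDerivAt.comp_hasDerivAt r h1
  have hmean : ∀ (g : sphere (0 : E3) 1 → ℝ) (C : ℝ), (∀ ω, ‖g ω‖ ≤ C) →
      |(1 / (4 * π)) * ∫ ω, g ω ∂sphMeas| ≤ C := by
    intro g C hg
    have := norm_integral_le_of_norm_le_const (μ := sphMeas) (ae_of_all _ hg)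
    rw [sphMeas_univ, Real.norm_eq_abs] at this
    rw [abs_mul, abs_of_pos (by positivity : 0 < 1 / (4 * π))]
    calc _ ≤ 1 / (4 * π) * (C * (4 * π)) := by gcongr
      _ = C := by field_simp
  have hmf : m = fun r => (1 / (4 * π)) * sphInt f r := funext hm
  refine ⟨fun r => (1 / (4 * π)) * ∫ ω : sphere (0 : E3) 1, fderiv ℝ f (r • (ω : E3)) ω ∂sphMeas,
    C1 + C2, |R|, by positivity, ?_, ?_, ?_, ?_, ?_⟩
  · intro r
    rw [hmf]
    exact (hder r).const_mul _
  · intro r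
    exact (hmean _ C2 fun ω => hbd ω r).trans (by linarith)
  · intro r
    rw [hm]
    exact (hmean _ C1 fun ω => hC1 _).trans (by linarith)
  · rw [hm, sphInt]
    simp only [zero_smul, integral_const, sphMeas_univ, smul_eq_mul]
    field_simp
  · intro r hr
    rw [hm, sphInt]
    have : ∀ ω : sphere (0 : E3) 1, f (r • (ω : E3)) = 0 := fun ω => by
      apply hR
      rw [norm_smul, hω, mul_one]
      exact (le_abs_self _).trans (hr.trans (le_abs_self r))
    simp [this]

/-- The mean-free part `v` of `f` is differentiable off the origin with bounded derivatives and
vanishes outside a ball; moreover `v = O(|x|)`, because the mean agrees with `f` at the origin. -/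
lemma meanfree_props (f : E3 → ℝ) (hf : ContDiff ℝ 1 f) (hs : HasCompactSupport f) (m m' : ℝ → ℝ)
    (C R : ℝ) (hm : ∀ r, HasDerivAt m (m' r) r) (hC : ∀ r, |m' r| ≤ C) (h0 : m 0 = f 0)
    (hR : ∀ r, R ≤ r → m r = 0) (v : E3 → ℝ) (hv : ∀ x, f x = m ‖x‖ + v x) :
    Measurable v ∧ (∀ x, x ≠ 0 → DifferentiableAt ℝ v x) ∧
    (∀ k x, x ≠ 0 → pd k f x = m' ‖x‖ * (x k * ‖x‖⁻¹) + pd k v x) ∧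
    ∃ D R', 0 ≤ D ∧ (∀ x, |v x| ≤ D * ‖x‖) ∧ (∀ k x, x ≠ 0 → |pd k v x| ≤ D) ∧
      ∀ x, R' ≤ ‖x‖ → v x = 0 := by
  have hve : v = fun x => f x - m ‖x‖ := funext fun x => by rw [hv x]; ring
  have hmc : Continuous m := continuous_iff_continuousAt.2 fun r => (hm r).continuousAt
  have hdm : ∀ x : E3, x ≠ 0 → DifferentiableAt ℝ (fun y : E3 => m ‖y‖) x := fun x hx =>
    ((hm ‖x‖).comp_hasFDerivAt x (diff_norm hx).hasFDerivAt).differentiableAt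
  have hpd : ∀ k x, x ≠ 0 → pd k v x = pd k f x - m' ‖x‖ * (x k * ‖x‖⁻¹) := fun k x hx => by
    rw [hve, pd_sub k (hf.differentiable one_ne_zero x) (hdm x hx), pd_comp_norm k hx (hm ‖x‖)]
  obtain ⟨C2, hC2⟩ := (hs.fderiv (𝕜 := ℝ)).exists_bound_of_continuous (hf.continuous_fderiv one_ne_zero)
  have hC20 : 0 ≤ C2 := (norm_nonneg _).trans (hC2 0)
  have hC0 : 0 ≤ C := (abs_nonneg _).trans (hC 0)
  obtain ⟨R2, hR2⟩ := zero_of_cs hs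
  refine ⟨?_, ?_, ?_, C2 + C, max R R2, by positivity, ?_, ?_, ?_⟩
  · rw [hve]; exact (hf.continuous.sub (hmc.comp continuous_norm)).measurable
  · intro x hx
    rw [hve]; exact (hf.differentiable one_ne_zero x).sub (hdm x hx)
  · intro k x hx
    rw [hpd k x hx]; ring
  · intro x
    have h1 : ‖f x - f 0‖ ≤ C2 * ‖x - 0‖ :=
      Convex.norm_image_sub_le_of_norm_fderiv_le (𝕜 := ℝ) (s := Set.univ)
        (fun y _ => hf.differentiable one_ne_zero y) (fun y _ => hC2 y) convex_univ trivial trivial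
    have h2 : ‖m ‖x‖ - m 0‖ ≤ C * ‖‖x‖ - 0‖ :=
      Convex.norm_image_sub_le_of_norm_hasDerivWithin_le (s := Set.univ)
        (fun y _ => (hm y).hasDerivWithinAt) (fun y _ => hC y) convex_univ trivial trivial
    rw [sub_zero] at h1 h2
    rw [norm_norm] at h2
    have : v x = (f x - f 0) - (m ‖x‖ - m 0) := by rw [hve, h0]; ring
    rw [this, add_mul]
    exact (norm_sub_le _ _).trans (add_le_add h1 h2)
  · intro k x hx
    rw [hpd k x hx]
    refine (abs_sub _ _).trans (add_le_add ?_ ?_)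
    · simpa [pd] using (fderiv ℝ f x).le_of_opNorm_le (hC2 _) (EuclideanSpace.single k (1 : ℝ))
    · rw [abs_mul]
      exact (mul_le_of_le_one_right (abs_nonneg _) (coord_rho x k)).trans (hC _)
  · intro x hx
    rw [hve]
    simp only
    rw [hR2 x ((le_max_right _ _).trans hx), hR _ ((le_max_left _ _).trans hx), sub_zero]

lemma abs_mul_le' {a b A B : ℝ} (ha : |a| ≤ A) (hb : |b| ≤ B) : |a * b| ≤ A * B := by
  rw [abs_mul]
  exact mul_le_mul ha hb (abs_nonneg _) ((abs_nonneg _).trans ha)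

/-- The expanded derivative `∂_k (x_l ū v / |x|³)` integrates to zero. The bound `v = O(|x|)`
makes the function `O(|x|⁻¹)` and its derivative `O(|x|⁻²)` near the origin. -/
lemma ibp_cross (m m' : ℝ → ℝ) (C D R : ℝ) (hm : ∀ r, HasDerivAt m (m' r) r)
    (hC' : ∀ r, |m' r| ≤ C) (hC : ∀ r, |m r| ≤ C) (v : E3 → ℝ) (hvm : Measurable v)
    (hvd : ∀ x, x ≠ 0 → DifferentiableAt ℝ v x) (hD : ∀ x, |v x| ≤ D * ‖x‖)
    (hD' : ∀ k x, x ≠ 0 → |pd k v x| ≤ D) (hR : ∀ x, R ≤ ‖x‖ → v x = 0) (k l : Fin 3) :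
    HasI (fun x => (if l = k then 1 else 0) * m ‖x‖ * v x * ‖x‖⁻¹ ^ 3 +
      x l * (m' ‖x‖ * (x k * ‖x‖⁻¹)) * v x * ‖x‖⁻¹ ^ 3 +
      x l * m ‖x‖ * pd k v x * ‖x‖⁻¹ ^ 3 -
      3 * (x l * m ‖x‖ * v x * x k * ‖x‖⁻¹ ^ 5)) 0 := by
  set Q : E3 → ℝ := fun x => x l * m ‖x‖ * v x * ‖x‖⁻¹ ^ 3 with hQ
  have hmc : Continuous m := continuous_iff_continuousAt.2 fun r => (hm r).continuousAt
  have hdm : ∀ x : E3, x ≠ 0 → DifferentiableAt ℝ (fun y : E3 => m ‖y‖) x := fun x hx =>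
    ((hm ‖x‖).comp_hasFDerivAt x (diff_norm hx).hasFDerivAt).differentiableAt
  have hC0 : 0 ≤ C := (abs_nonneg _).trans (hC 0)
  have hpt : ∀ x, x ≠ 0 → pd k Q x = (if l = k then 1 else 0) * m ‖x‖ * v x * ‖x‖⁻¹ ^ 3 +
      x l * (m' ‖x‖ * (x k * ‖x‖⁻¹)) * v x * ‖x‖⁻¹ ^ 3 +
      x l * m ‖x‖ * pd k v x * ‖x‖⁻¹ ^ 3 -
      3 * (x l * m ‖x‖ * v x * x k * ‖x‖⁻¹ ^ 5) := by
    intro x hx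
    have d1 := diff_coord l x
    have d2 := hdm x hx
    have d3 := hvd x hx
    have d4 := diff_invpow 3 hx
    rw [hQ, pd_mul k ((d1.fun_mul d2).fun_mul d3) d4, pd_mul k (d1.fun_mul d2) d3, pd_mul k d1 d2, pd_coord,
      pd_comp_norm k hx (hm _), pd_invpow 3 k hx]
    push_cast
    ring
  have hvb : ∀ x, |v x * ‖x‖⁻¹| ≤ |D| := by
    intro x
    rw [abs_mul, abs_of_nonneg (a := ‖x‖⁻¹) (by positivity)]
    by_cases hx : x = 0
    · simp [hx]
    · have : 0 < ‖x‖ := norm_pos_iff.2 hx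
      rw [← div_eq_mul_inv, div_le_iff₀ this]
      exact (hD x).trans (by gcongr; exact le_abs_self D)
  have hvb2 : ∀ x, |v x| ≤ |D| * |R| := by
    intro x
    by_cases hx : R ≤ ‖x‖
    · rw [hR x hx, abs_zero]; positivity
    · calc |v x| ≤ D * ‖x‖ := hD x
        _ ≤ |D| * |R| := by
          gcongr
          · exact le_abs_self D
          · exact (not_le.1 hx).le.trans (le_abs_self R)
  have hQi : Integrable Q := by
    refine integrable_sing1 Q ?_ (C * |D|) R ?_ ?_
    · have : Measurable fun x : E3 => m ‖x‖ := (hmc.comp continuous_norm).measurable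
      have : Measurable Q := by fun_prop
      exact this.aestronglyMeasurable
    · intro x hx
      have : Q x = (x l * ‖x‖⁻¹) * (m ‖x‖ * (v x * ‖x‖⁻¹)) * ‖x‖⁻¹ := by rw [hQ]; ring
      rw [this]
      refine (abs_mul_le' (abs_mul_le' (coord_rho x l) (abs_mul_le' (hC _) (hvb x)))
        (abs_of_nonneg (by positivity)).le).trans ?_
      simp
    · intro x hx
      rw [hQ]; simp [hR x hx]
  have hQi' : Integrable (pd k Q) := by
    refine integrable_sing _ (meas_pd Q k).aestronglyMeasurable (5 * (C * |D|) + C * (|D| * |R|)) (R + 1) ?_ ?_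
    · intro x hx
      have : pd k Q x = ((if l = k then 1 else 0) * (m ‖x‖ * (v x * ‖x‖⁻¹)) +
        (x l * ‖x‖⁻¹) * ((x k * ‖x‖⁻¹) * (m' ‖x‖ * v x)) +
        (x l * ‖x‖⁻¹) * (m ‖x‖ * pd k v x) -
        3 * ((x l * ‖x‖⁻¹) * ((x k * ‖x‖⁻¹) * (m ‖x‖ * (v x * ‖x‖⁻¹))))) * ‖x‖⁻¹ ^ 2 := by
        rw [hpt x hx]; ring
      rw [this]
      refine abs_mul_le' ?_ (abs_of_nonneg (by positivity)).le
      have b1 := abs_le.1 (abs_mul_le' (abs_delta l k) (abs_mul_le' (hC ‖x‖) (hvb x)))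
      have b2 := abs_le.1 (abs_mul_le' (coord_rho x l) (abs_mul_le' (coord_rho x k)
        (abs_mul_le' (hC' ‖x‖) (hvb2 x))))
      have b3 := abs_le.1 (abs_mul_le' (coord_rho x l)
        (abs_mul_le' (hC ‖x‖) ((hD' k x hx).trans (le_abs_self D))))
      have b4 := abs_le.1 (abs_mul_le' (coord_rho x l) (abs_mul_le' (coord_rho x k)
        (abs_mul_le' (hC ‖x‖) (hvb x))))
      rw [abs_le]
      constructor <;> linarith [b1.1, b1.2, b2.1, b2.2, b3.1, b3.2, b4.1, b4.2]
    · intro x hx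
      have : Q =ᶠ[nhds x] fun _ => 0 := by
        have ho : {y : E3 | R < ‖y‖} ∈ nhds x :=
          (isOpen_lt continuous_const continuous_norm).mem_nhds (by simp; linarith)
        filter_upwards [ho] with y hy
        rw [hQ]; simp [hR y (le_of_lt hy)]
      rw [pd, this.fderiv_eq]
      simp
  refine HasI.congr (f := pd k Q) ⟨hQi', integral_pd_eq_zero k Q ?_ hQi hQi'⟩ hpt
  intro x hx
  have d1 := diff_coord l x
  have d2 := hdm x hx
  have d3 := hvd x hx
  have d4 := diff_invpow 3 hx
  exact ((d1.fun_mul d2).fun_mul d3).fun_mul d4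

/-! ### Pointwise identities -/

/-- `∂ᵢ Φᵢⱼ = c_α (β - 1) xⱼ / |x|³` with `β = α/(α+2)`. -/
lemma div_Phi (α : ℝ) (j : Fin 3) {x : E3} (hx : x ≠ 0) :
    ∑ i, pd i (fun z => Phi α z i j) x = cA α * (α / (α + 2) - 1) * x j * ‖x‖⁻¹ ^ 3 := by
  have h0 : ‖x‖ ≠ 0 := norm_ne_zero_iff.2 hx
  have h1 : ‖x‖⁻¹ ^ 5 * (x 0 ^ 2 + x 1 ^ 2 + x 2 ^ 2) = ‖x‖⁻¹ ^ 3 := by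
    rw [← norm_sq_sum]; field_simp
  simp only [pd_Phi α _ _ _ hx, Fin.sum_univ_three]
  generalize ‖x‖⁻¹ ^ 3 = s at *
  generalize ‖x‖⁻¹ ^ 5 = t at *
  subst h1
  fin_cases j <;> simp <;> ring

/-- The antisymmetric integrand for `u = ū + v` equals the one for `v` plus a divergence, at one
point: `X` is the point, `ρ` stands for `|x|⁻¹`, `w` and `W` for `ū` and its radial derivative,
and `V k i` for `∂_k vᵢ`. The terms quadratic in `ū` cancel because the derivatives of `ū` are
radial; the mixed ones are the derivatives of `ibp_cross`. -/
lemma alg_cross (X w v W : Fin 3 → ℝ) (V : Fin 3 → Fin 3 → ℝ) (ρ d : ℝ) :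
    (∑ j, ∑ k, ((w j + v j) * (W k * (X k * ρ) + V k k) -
        (w k + v k) * (W j * (X k * ρ) + V k j)) * (d * X j * ρ ^ 3)) =
    (∑ j, ∑ k, (v j * V k k - v k * V k j) * (d * X j * ρ ^ 3)) +
    d * ∑ j, ∑ k, (((if j = k then 1 else 0) * w j * v k * ρ ^ 3 +
      X j * (W j * (X k * ρ)) * v k * ρ ^ 3 + X j * w j * V k k * ρ ^ 3 -
      3 * (X j * w j * v k * X k * ρ ^ 5)) + (-1) * (
      (if j = k then 1 else 0) * w k * v j * ρ ^ 3 +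
      X j * (W k * (X k * ρ)) * v j * ρ ^ 3 + X j * w k * V k j * ρ ^ 3 -
      3 * (X j * w k * v j * X k * ρ ^ 5))) := by
  simp [Fin.sum_univ_three]
  ring

/-- Once the antisymmetric form is split off, the first-order terms left by the integration by
parts contain radial derivatives only; here at one point, with `A k i` for `∂_k uᵢ`, `ρ` for
`|x|⁻¹`, and `β` for `α/(α+2)`. -/
lemma alg_radial (X a : Fin 3 → ℝ) (A : Fin 3 → Fin 3 → ℝ) (ρ c β α : ℝ)
    (hβ : α * (β - 1) = - 2 * β) :
    (∑ i, ∑ j, ∑ k, A k i * a j * (c * (-(if i = j then (1 : ℝ) else 0) * X k * ρ ^ 3 +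
      β * (((if i = k then (1 : ℝ) else 0) * X j + (if j = k then (1 : ℝ) else 0) * X i)
        * ρ ^ 3 - 3 * (X i * X j * X k) * ρ ^ 5)))) +
    α * (∑ j, (∑ k, A k k) * a j * (c * (β - 1) * X j * ρ ^ 3)) =
    (α / 2) * (∑ j, ∑ k, (a j * A k k - a k * A k j) * (c * (β - 1) * X j * ρ ^ 3)) +
    (-c / 2) * ((∑ i, (∑ k, (A k i * a i + a i * A k i) * X k) * ρ ^ 3 * 1) +
      3 * β * ∑ i, ∑ j, (∑ k, (A k i * a j + a i * A k j) * X k) * ρ ^ 3 * (X i * X j * ρ ^ 2)) := by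
  have e1 : α * (∑ j, (∑ k, A k k) * a j * (c * (β - 1) * X j * ρ ^ 3)) =
      (α * (β - 1)) * (c * ρ ^ 3 * ∑ j, (∑ k, A k k) * a j * X j) := by
    simp only [Fin.sum_univ_three]; ring
  have e2 : (α / 2) * (∑ j, ∑ k, (a j * A k k - a k * A k j) * (c * (β - 1) * X j * ρ ^ 3)) =
      (α * (β - 1)) * (c * ρ ^ 3 / 2 * ∑ j, ∑ k, (a j * A k k - a k * A k j) * X j) := by
    simp only [Fin.sum_univ_three]; ring
  rw [e1, e2, hβ]
  simp [Fin.sum_univ_three]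
  ring

/-- The product rules behind the integration by parts of the energy, at one point: `A k i`,
`H k i`, `dv i` stand for `∂_k uᵢ`, `∂_k² uᵢ`, `∂ᵢ div u`, and `P`, `DP k` for `Φ`, `∂_k Φ`.
The last bracket consists of full derivatives. -/
lemma alg_ibp (a : Fin 3 → ℝ) (A : Fin 3 → Fin 3 → ℝ) (H : Fin 3 → Fin 3 → ℝ) (dv : Fin 3 → ℝ)
    (P : Fin 3 → Fin 3 → ℝ) (DP : Fin 3 → Fin 3 → Fin 3 → ℝ) (α : ℝ) :
    (∑ i, ∑ j, (-(∑ k, H k i) - α * dv i) * P i j * a j) =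
      (∑ i, ∑ j, ∑ k, (A k i * A k j + α * A k k * A i j) * P i j) +
      ((∑ i, ∑ j, ∑ k, A k i * a j * DP k i j) + α * ∑ i, ∑ j, (∑ k, A k k) * a j * DP i i j) +
      ((-1) * (∑ i, ∑ j, ∑ k, ((H k i * a j + A k i * A k j) * P i j + A k i * a j * DP k i j)) +
      (-α) * ∑ i, ∑ j, ((dv i * a j + (∑ k, A k k) * A i j) * P i j + (∑ k, A k k) * a j * DP i i j)) := by
  simp only [Finset.mul_sum, ← Finset.sum_add_distrib]
  refine Finset.sum_congr rfl fun i _ => Finset.sum_congr rfl fun j _ => ?_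
  simp only [Fin.sum_univ_three]
  ring

/-! ### The energy identity -/

/-- With the spherical-mean decomposition `u = ū + v`,
`∫ (Lu)·(Φu) dx = (1/2)|u(0)|² + B*(u,u)`, where in the antisymmetric part of the bilinear
form `u` is replaced by its mean-free part `v`. -/
theorem lame_energy_eq_half_sq_add_bilinear_meanfree
    (α : ℝ) (hα : -1 < α)
    (u : E3 → Fin 3 → ℝ) (hu : IsTestOn Set.univ u)
    (ub : Fin 3 → ℝ → ℝ) (v : E3 → Fin 3 → ℝ)
    (hdec : IsSphericalMeanDecomp u ub v) :
    ∫ x : E3, ∑ i, ∑ j, lame α u x i * Phi α x i j * u x j =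
      (1 / 2) * (∑ i, (u 0 i) ^ 2) +
      ((α / 2) * ∫ x : E3, ∑ i, ∑ j, ∑ k,
          (v x j * pd k (fun z => v z k) x - v x k * pd k (fun z => v z j) x) *
            pd i (fun z => Phi α z i j) x) +
      (∫ x : E3, ∑ i, ∑ j, ∑ k,
          (pd k (fun z => u z i) x * pd k (fun z => u z j) x +
            α * pd k (fun z => u z k) x * pd i (fun z => u z j) x) * Phi α x i j) := by
  obtain ⟨husm, hucs, -⟩ := hu
  have hui : ∀ i, ContDiff ℝ 2 (fun x => u x i) := fun i =>
    contDiff_infty.1 (contDiff_pi.1 husm i) 2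
  have hui1 : ∀ i, ContDiff ℝ 1 (fun x => u x i) := fun i => (hui i).of_le one_le_two
  have hus : ∀ i, HasCompactSupport (fun x => u x i) := fun i =>
    hucs.comp_left (g := fun y : Fin 3 → ℝ => y i) rfl
  have hA : ∀ k i, ContDiff ℝ 1 (pd k fun x => u x i) := fun k i =>
    ((hui i).fderiv_right (m := 1) (by norm_num)).clm_apply contDiff_const
  have hAs : ∀ k i, HasCompactSupport (pd k fun x => u x i) := fun k i => pd_cs (hus i) k
  have hdiv : ContDiff ℝ 1 (divg u) := ContDiff.sum fun k _ => hA k k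
  have du : ∀ i x, DifferentiableAt ℝ (fun x => u x i) x := fun i x =>
    (hui1 i).differentiable one_ne_zero x
  have dA : ∀ k i x, DifferentiableAt ℝ (pd k fun x => u x i) x := fun k i x =>
    (hA k i).differentiable one_ne_zero x
  have ddiv : ∀ x, DifferentiableAt ℝ (divg u) x := fun x => hdiv.differentiable one_ne_zero x
  choose m' C R hC0 hm hC' hC h0 hR using fun i =>
    mean_props (fun x => u x i) (hui1 i) (hus i) (ub i) (hdec.1 i)
  have hmf := fun i => meanfree_props (fun x => u x i) (hui1 i) (hus i) (ub i) (m' i) (C i) (R i)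
    (hm i) (hC' i) (h0 i) (hR i) (fun x => v x i) (fun x => hdec.2 x i)
  choose hvm hvd hpu D R' hD0 hD hD' hR' using hmf
  have cross := fun j n k l => ibp_cross (ub j) (m' j) (C j) (D n) (R' n) (hm j) (hC' j) (hC j)
    (fun x => v x n) (hvm n) (hvd n) (hD n) (hD' n) (hR' n) k l
  have S1 := fun i j k => ibp_Phi α i j k (g := fun x => pd k (fun z => u z i) x * u x j)
    ((hA k i).mul (hui1 j)) ((hus j).mul_left)
  have S2 := fun i j => ibp_Phi α i j i (g := fun x => divg u x * u x j)
    (hdiv.mul (hui1 j)) ((hus j).mul_left)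
  have R1 := fun i => integral_radial (fun x => u x i * u x i) ((hui1 i).mul (hui1 i))
    ((hus i).mul_left) (fun _ => 1) measurable_const 1 (by simp) (by simp)
  have R2 := fun i j => integral_radial (fun x => u x i * u x j) ((hui1 i).mul (hui1 j))
    ((hus j).mul_left) (fun x => x i * x j * ‖x‖⁻¹ ^ 2) (by fun_prop) 1
    (by
      intro x
      rw [show x i * x j * ‖x‖⁻¹ ^ 2 = (x i * ‖x‖⁻¹) * (x j * ‖x‖⁻¹) by ring]
      exact abs_mul_le_one (coord_rho x i) (coord_rho x j))
    (by
      intro r hr x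
      simp [norm_smul, abs_of_pos hr]
      field_simp)
  have hB : Integrable fun x : E3 => ∑ i, ∑ j, ∑ k,
          (pd k (fun z => u z i) x * pd k (fun z => u z j) x +
            α * pd k (fun z => u z k) x * pd i (fun z => u z j) x) * Phi α x i j := by
    refine integrable_finsetSum _ fun i _ => integrable_finsetSum _ fun j _ =>
      integrable_finsetSum _ fun k _ => int_mul_Phi α i j ?_ ?_
    · have := fun k i => (hA k i).continuous
      fun_prop
    · exact ((hAs k j).mul_left).add ((hAs i j).mul_left)
  have hUi : Integrable fun x : E3 => ∑ i, ∑ j, ∑ k,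
          (u x j * pd k (fun z => u z k) x - u x k * pd k (fun z => u z j) x) *
            pd i (fun z => Phi α z i j) x := by
    refine integrable_finsetSum _ fun i _ => integrable_finsetSum _ fun j _ =>
      integrable_finsetSum _ fun k _ => int_mul_pd_Phi α i j i ?_ ?_
    · have := fun k i => (hA k i).continuous
      have := fun i => (hui i).continuous
      fun_prop
    · exact ((hAs k k).mul_left).sub ((hAs k j).mul_left)
  have hcr := (HasI.sum fun j => HasI.sum fun k =>
    (cross j k k j).add ((cross k j k j).const_mul (-1))).const_mul (cA α * (α / (α + 2) - 1))
  -- The factor of `∂ᵢ Φᵢⱼ` does not depend on `i`, so only the divergence of `Φ` enters.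
  have pull : ∀ (x : E3), x ≠ 0 → ∀ F : Fin 3 → Fin 3 → ℝ,
      ∑ i, ∑ j, ∑ k, F j k * pd i (fun z => Phi α z i j) x =
      ∑ j, ∑ k, F j k * (cA α * (α / (α + 2) - 1) * x j * ‖x‖⁻¹ ^ 3) := by
    intro x hx F
    rw [Finset.sum_comm]
    refine Finset.sum_congr rfl fun j _ => ?_
    rw [Finset.sum_comm]
    refine Finset.sum_congr rfl fun k _ => ?_
    rw [← Finset.mul_sum, div_Phi α j hx]
  have hUV : ∀ x : E3, x ≠ 0 → _ := fun x hx =>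
    alg_cross (fun i => x i) (fun i => ub i ‖x‖) (fun i => v x i) (fun i => m' i ‖x‖)
      (fun k i => pd k (fun z => v z i) x) ‖x‖⁻¹ (cA α * (α / (α + 2) - 1))
  have hUV' : ∀ x : E3, x ≠ 0 → _ := fun x hx => by
    have h := hUV x hx
    simp only [← hpu _ _ x hx, ← hdec.2] at h
    rw [← pull x hx, ← pull x hx] at h
    exact h
  have hV : Integrable fun x : E3 => ∑ i, ∑ j, ∑ k,
          (v x j * pd k (fun z => v z k) x - v x k * pd k (fun z => v z j) x) *
            pd i (fun z => Phi α z i j) x := by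
    refine (hUi.sub hcr.1).congr (ae_ne_zero.mono fun x hx => ?_)
    simp only [Pi.sub_apply]
    rw [hUV' x hx]
    ring
  have hα2 : α + 2 ≠ 0 := by linarith
  have hα1 : α + 1 ≠ 0 := by linarith
  have hpi := Real.pi_ne_zero
  have hβ : α * (α / (α + 2) - 1) = -2 * (α / (α + 2)) := by field_simp; ring
  have hBI : HasI _ _ := ⟨hB, rfl⟩
  have hVI : HasI _ _ := ⟨hV, rfl⟩
  have hR1 := HasI.sum fun i => (R1 i : HasI _ _)
  have hR2 := (HasI.sum fun i => HasI.sum fun j => (R2 i j : HasI _ _)).const_mul (3 * (α / (α + 2)))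
  have hrad := (hR1.add hR2).const_mul (-cA α / 2)
  have hS1 := (HasI.sum fun i => HasI.sum fun j => HasI.sum fun k => S1 i j k).const_mul (-1)
  have hS2 := (HasI.sum fun i => HasI.sum fun j => S2 i j).const_mul (-α)
  -- Every piece of the pointwise decomposition of the energy density, with its integral.
  have tot := (hBI.add (((hVI.add hcr).const_mul (α / 2)).add hrad)).add (hS1.add hS2)
  have key := tot.congr (g := fun x => ∑ i, ∑ j, lame α u x i * Phi α x i j * u x j) (by
    intro x hx
    have hl := alg_ibp (fun i => u x i) (fun k i => pd k (fun z => u z i) x)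
      (fun k i => pd k (pd k (fun z => u z i)) x) (fun i => pd i (divg u) x)
      (fun i j => Phi α x i j) (fun k i j => pd k (fun z => Phi α z i j) x) α
    have hr := alg_radial (fun i => x i) (fun i => u x i) (fun k i => pd k (fun z => u z i) x)
      ‖x‖⁻¹ (cA α) (α / (α + 2)) α hβ
    simp only [← pd_Phi α _ _ _ hx] at hr
    rw [← pull x hx] at hr
    rw [hUV' x hx] at hr
    have hp : ∑ i, ∑ j, (∑ k, pd k (fun z => u z k) x) * u x j * pd i (fun z => Phi α z i j) x =
        ∑ j, (∑ k, pd k (fun z => u z k) x) * u x j *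
          (cA α * (α / (α + 2) - 1) * x j * ‖x‖⁻¹ ^ 3) := by
      rw [Finset.sum_comm]
      refine Finset.sum_congr rfl fun j _ => ?_
      rw [← Finset.mul_sum, div_Phi α j hx]
    rw [← hp] at hr
    rw [hr] at hl
    simp only [lame, lap, pd_mul _ (dA _ _ x) (du _ x), pd_mul _ (ddiv x) (du _ x),
      pd_mul _ (du _ x) (du _ x)]
    exact hl.symm)
  rw [key.2]
  have hM : ∀ i j : Fin 3, ∫ ω : sphere (0 : E3) 1,
      (ω : E3) i * (ω : E3) j * ‖(ω : E3)‖⁻¹ ^ 2 ∂sphMeas =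
      ∫ ω : sphere (0 : E3) 1, (ω : E3) i * (ω : E3) j ∂sphMeas := by
    intro i j
    simp
  have hmom := sph_moment (fun i => u 0 i)
  simp only [hM, integral_const, sphMeas_univ, neg_mul, Finset.sum_neg_distrib, hmom,
    Finset.sum_const_zero, mul_zero, add_zero, smul_eq_mul, mul_one, ← Finset.sum_mul, ← pow_two]
  -- The normalization of `Φ`: the factor `(1 + β)` collects the traces `4π` and `3β · 4π/3`.
  have hc : cA α * (4 * π) * (1 + α / (α + 2)) = 1 := by
    rw [cA]; field_simp; ring
  linear_combination (1 / 2 * ∑ i, u 0 i ^ 2) * hc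
end
end

section
/- For every real α > −1 (α ≠ −2 automatic): the three leading principal minors of B₊(α) equal p₊,1(α) = (2α²+6α+6)/(3(α+2)), p₊,2(α) = −[α⁴ − 4(1−√2)α³ − 12(3−√2)α² − 12(6−√2)α − 48]/(12(α+2)²), and p₊,3(α) = det B₊(α) = −α[6α⁵ + (23+3√2)α⁴ + (13+19√2)α³ − (77−38√2)α² − (157−24√2)α − 96]/(12(α+2)³); moreover det B₋(α) = [−(2+7√3)α⁴ + 2(15+√2−11√3+√6)α³ + 2(57+3√2−10√3+3√6)α² + 6(20+√2+√6)α + 24]/(6(α+2)²). -/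
/-!
Since `α > -1`, the denominator `α + 2` is nonzero. Writing `s = √2` and `t = √3`, so that
`1/√2 = s/2`, `1/√3 = t/3` and `√6 = s t`, clearing denominators turns each identity into a
polynomial identity in `α, s, t` modulo the relations `s² = 2` and `t² = 3`.
-/

open MeasureTheory Metric Real Filter

noncomputable section

/-- The matrix `B₊(α)`. -/
def Bplus (α : ℝ) : Matrix (Fin 3) (Fin 3) ℝ :=
  !![1 + (α / 3) * ((2 * α + 3) / (α + 2)), -(α / (2 * Real.sqrt 3)),
       -(α / (2 * Real.sqrt 3)) * ((3 * α + 4) / (α + 2));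
     -(α / (2 * Real.sqrt 3)), 1 - (1 / Real.sqrt 2) * (α / (α + 2)),
       -(α / 2) * ((α + (Real.sqrt 2)⁻¹) / (α + 2));
     -(α / (2 * Real.sqrt 3)) * ((3 * α + 4) / (α + 2)),
       -(α / 2) * ((α + (Real.sqrt 2)⁻¹) / (α + 2)), α]

/-- The matrix `B₋(α)`. -/
def Bminus (α : ℝ) : Matrix (Fin 2) (Fin 2) ℝ :=
  !![1 + (α / 3) * ((2 * α + 3) / (α + 2)),
       (α / 2) * ((3 * α + 4) / (α + 2)) + α / (2 * Real.sqrt 3);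
     (α / 2) * ((3 * α + 4) / (α + 2)) + α / (2 * Real.sqrt 3),
       1 + 3 * α + (α / (α + 2)) * (1 + (1 + Real.sqrt 3) / Real.sqrt 2 - Real.sqrt 3 * α)]

/-- The leading principal minors of `B₊(α)` and the determinant of `B₋(α)`. -/
theorem Bplus_Bminus_minors (α : ℝ) (hα : -1 < α) :
    (Bplus α 0 0 = (2 * α ^ 2 + 6 * α + 6) / (3 * (α + 2))) ∧
    (Matrix.det !![Bplus α 0 0, Bplus α 0 1; Bplus α 1 0, Bplus α 1 1] =
      -(α ^ 4 - 4 * (1 - Real.sqrt 2) * α ^ 3 - 12 * (3 - Real.sqrt 2) * α ^ 2 -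
          12 * (6 - Real.sqrt 2) * α - 48) / (12 * (α + 2) ^ 2)) ∧
    (Matrix.det (Bplus α) =
      -(α * (6 * α ^ 5 + (23 + 3 * Real.sqrt 2) * α ^ 4 + (13 + 19 * Real.sqrt 2) * α ^ 3 -
          (77 - 38 * Real.sqrt 2) * α ^ 2 - (157 - 24 * Real.sqrt 2) * α - 96)) /
        (12 * (α + 2) ^ 3)) ∧
    (Matrix.det (Bminus α) =
      (-(2 + 7 * Real.sqrt 3) * α ^ 4 +
          2 * (15 + Real.sqrt 2 - 11 * Real.sqrt 3 + Real.sqrt 6) * α ^ 3 +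
          2 * (57 + 3 * Real.sqrt 2 - 10 * Real.sqrt 3 + 3 * Real.sqrt 6) * α ^ 2 +
          6 * (20 + Real.sqrt 2 + Real.sqrt 6) * α + 24) / (6 * (α + 2) ^ 2)) := by
  have hs : Real.sqrt 2 ^ 2 = 2 := Real.sq_sqrt (by norm_num)
  have ht : Real.sqrt 3 ^ 2 = 3 := Real.sq_sqrt (by norm_num)
  have h6 : Real.sqrt 6 = Real.sqrt 2 * Real.sqrt 3 := by
    rw [← Real.sqrt_mul (by norm_num)]; norm_num
  have hs0 : Real.sqrt 2 ≠ 0 := by positivity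
  have ht0 : Real.sqrt 3 ≠ 0 := by positivity
  have hsi : (Real.sqrt 2)⁻¹ = Real.sqrt 2 / 2 := by
    field_simp; exact hs.symm
  have hti : (Real.sqrt 3)⁻¹ = Real.sqrt 3 / 3 := by
    field_simp; exact ht.symm
  have hα2 : α + 2 ≠ 0 := by linarith
  rw [h6]
  simp only [Bplus, Bminus, Matrix.det_fin_two, Matrix.det_fin_three, Matrix.of_apply,
    Matrix.cons_val', Matrix.cons_val, div_eq_mul_inv _ (2 * Real.sqrt 3),
    div_eq_mul_inv _ (Real.sqrt 2), mul_inv, hsi, hti]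
  -- only `s² = 2` and `t² = 3` are needed from here on; `grind` reduces modulo these relations
  generalize Real.sqrt 2 = s at *
  generalize Real.sqrt 3 = t at *
  refine ⟨?_, ?_, ?_, ?_⟩
  · field_simp
    ring
  · field_simp
    grind
  · field_simp
    grind
  · field_simp
    grind
end
end
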